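/- (Continuity of KL_inf for bounded distributions.) Endow the family B of probability distributions on [0,1] with the topology of weak convergence. Then the function (ν, x) ↦ KL_inf^U(ν,B,x) is jointly continuous on B × [0,1), and the function (ν, x) ↦ KL_inf^L(ν,B,x) is jointly continuous on B × (0,1]. -/

import Mathlib

open MeasureTheory ProbabilityTheory Filter Set
open scoped ENNReal

noncomputable section
open scoped Classical

/-- `B`: the family of probability distributions supported on `[0,1]`. -/
def Bset : Set (Measure ℝ) := {κ | IsProbabilityMeasure κ ∧ κ (Set.Icc (0:ℝ) 1)ᶜ = 0}

/-- The mean `m(κ)` of a distribution `κ`. -/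
def mmean (κ : Measure ℝ) : ℝ := ∫ x, x ∂κ

/-- KL divergence, valued in `[0,∞]`: `∫ log(dμ/dν) dμ` when `μ ≪ ν` and this integral is
finite, and `∞` otherwise. -/
def KLdiv (μ ν : Measure ℝ) : ℝ≥0∞ :=
  if μ ≪ ν ∧ Integrable (llr μ ν) μ then ENNReal.ofReal (∫ x, llr μ ν x ∂μ) else ⊤

/-- `KL_inf^U(ν,B,x) = inf{ KL(ν,κ) : κ ∈ B, m(κ) ≥ x }`. -/
def KLinfU (ν : Measure ℝ) (x : ℝ) : ℝ≥0∞ :=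
  ⨅ κ ∈ {κ ∈ Bset | x ≤ mmean κ}, KLdiv ν κ

/-- `KL_inf^L(ν,B,x) = inf{ KL(ν,κ) : κ ∈ B, m(κ) ≤ x }`. -/
def KLinfL (ν : Measure ℝ) (x : ℝ) : ℝ≥0∞ :=
  ⨅ κ ∈ {κ ∈ Bset | mmean κ ≤ x}, KLdiv ν κ

/-- `KL_inf(ν,B,x)`: equals `KL_inf^U` for `x ≥ m(ν)` and `KL_inf^L` for `x < m(ν)`. -/
def KLinf (ν : Measure ℝ) (x : ℝ) : ℝ≥0∞ :=
  if mmean ν ≤ x then KLinfU ν x else KLinfL ν x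

/-- The family `B`, viewed inside the space of probability measures on ℝ endowed with the
topology of weak convergence. -/
def BsetW : Set (ProbabilityMeasure ℝ) :=
  {ν | (ν : Measure ℝ) (Set.Icc (0:ℝ) 1)ᶜ = 0}

/-!
A distribution on `[0, 1]` has mean at least `x < 1` exactly when the payoff `(1 - u) / (1 - x)` has
expectation at most `1`. By convex duality `KLinfU ν x` is therefore the supremum over `t ∈ [0, 1)`
of `E_ν log (1 - t + t (1 - u) / (1 - x))`. Gibbs' inequality shows that this supremum is a lower
bound, and it is approached by the distributions obtained from `ν` by dividing by the wealth
`1 - t + t (1 - u) / (1 - x)` at a near-optimal `t` and adding the missing mass as an atom at `1`.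

Each dual objective is jointly continuous in `(ν, x)`, so the supremum is lower semicontinuous. The
dual objective is moreover concave in `t` and vanishes at `t = 0`; hence the supremum over all `t`
is at most `r⁻¹` times the supremum over `t ≤ r`, which is continuous, and letting `r` tend to `1`
gives upper semicontinuity. The statement for `KLinfL` follows by reflecting `[0, 1]`.
-/

open InformationTheory
open scoped Topology

section KullbackLeibler

variable {α : Type*} {mα : MeasurableSpace α} {ν κ : Measure α}

-- Gibbs' inequality for `ν` against `κ` tilted by `log g`, that is, the normalization of `g • κ`.
lemma ofReal_integral_log_le_klDiv [IsProbabilityMeasure ν] [IsProbabilityMeasure κ] {g : α → ℝ}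
    (hpos : ∀ᵐ a ∂κ, 0 < g a) (hg : Integrable g κ)
    (hlog : Integrable (fun a ↦ Real.log (g a)) ν) (hle : ∫ a, g a ∂κ ≤ 1) :
    ENNReal.ofReal (∫ a, Real.log (g a) ∂ν) ≤ klDiv ν κ := by
  by_cases hac : ν ≪ κ
  swap; · simp [hac]
  by_cases hllr : Integrable (llr ν κ) ν
  swap; · simp [hllr]
  let f : α → ℝ := fun a ↦ Real.log (g a)
  have exp_f : (fun a ↦ Real.exp (f a)) =ᵐ[κ] g := hpos.mono fun a ha ↦ Real.exp_log ha
  have hexp : Integrable (fun a ↦ Real.exp (f a)) κ := hg.congr exp_f.symm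
  have := isProbabilityMeasure_tilted hexp
  have gibbs := integral_llr_add_sub_measure_univ_nonneg
    (hac.trans (absolutelyContinuous_tilted hexp)) (integrable_llr_tilted_right hac hlog hllr hexp)
  have log_mass_nonpos : Real.log (∫ a, Real.exp (f a) ∂κ) ≤ 0 := by
    rw [integral_congr_ae exp_f]
    exact Real.log_nonpos (integral_nonneg_of_ae (hpos.mono fun a ha ↦ ha.le)) hle
  rw [integral_llr_tilted_right hac hlog hexp hllr] at gibbs
  rw [klDiv_of_ac_of_integrable hac hllr]
  refine ENNReal.ofReal_le_ofReal ?_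
  simp only [probReal_univ] at gibbs ⊢
  linarith

lemma rnDeriv_le_of_le_withDensity [SigmaFinite κ] {f : α → ℝ≥0∞}
    (h : ν ≤ κ.withDensity f) : ν.rnDeriv κ ≤ᵐ[κ] f := by
  refine ae_le_of_forall_setLIntegral_le_of_sigmaFinite (Measure.measurable_rnDeriv ν κ)
    fun s hs _ ↦ ?_
  calc ∫⁻ a in s, ν.rnDeriv κ a ∂κ ≤ ν s := Measure.setLIntegral_rnDeriv_le s
    _ ≤ κ.withDensity f s := h s
    _ = ∫⁻ a in s, f a ∂κ := withDensity_apply f hs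

lemma llr_le_log_of_le_withDensity [SigmaFinite ν] [SigmaFinite κ] {g : α → ℝ}
    (hle : ν ≤ κ.withDensity fun a ↦ ENNReal.ofReal (g a)) :
    llr ν κ ≤ᵐ[ν] fun a ↦ Real.log (g a) := by
  have hac : ν ≪ κ :=
    (Measure.absolutelyContinuous_of_le hle).trans (withDensity_absolutelyContinuous _ _)
  filter_upwards [hac.ae_le (rnDeriv_le_of_le_withDensity hle), Measure.rnDeriv_pos hac]
    with a h_le h_pos
  have g_pos : 0 < g a := ENNReal.ofReal_pos.1 (h_pos.trans_le h_le)
  have h_lt_top : ν.rnDeriv κ a < ⊤ := h_le.trans_lt ENNReal.ofReal_lt_top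
  exact Real.log_le_log (ENNReal.toReal_pos h_pos.ne' h_lt_top.ne)
    (ENNReal.toReal_le_of_le_ofReal g_pos.le h_le)

lemma integrable_llr_of_le [IsFiniteMeasure ν] [IsFiniteMeasure κ] (hac : ν ≪ κ) {f : α → ℝ}
    (hf : Integrable f ν) (hle : llr ν κ ≤ᵐ[ν] f) : Integrable (llr ν κ) ν := by
  refine (hf.abs.add (Measure.integrable_toReal_rnDeriv (μ := κ) (ν := ν))).mono'
    (measurable_llr ν κ).aestronglyMeasurable ?_
  filter_upwards [hle, exp_neg_llr hac] with a h_le h_exp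
  have neg_llr_le : -llr ν κ a ≤ (κ.rnDeriv ν a).toReal := by
    linarith [Real.add_one_le_exp (-llr ν κ a)]
  have : 0 ≤ (κ.rnDeriv ν a).toReal := ENNReal.toReal_nonneg
  rw [Real.norm_eq_abs, Pi.add_apply, abs_le]
  constructor <;> linarith [le_abs_self (f a), abs_nonneg (f a)]

lemma klDiv_le_ofReal_integral_log [IsProbabilityMeasure ν] [IsProbabilityMeasure κ] {g : α → ℝ}
    (hlog : Integrable (fun a ↦ Real.log (g a)) ν)
    (hle : ν ≤ κ.withDensity fun a ↦ ENNReal.ofReal (g a)) :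
    klDiv ν κ ≤ ENNReal.ofReal (∫ a, Real.log (g a) ∂ν) := by
  have hac : ν ≪ κ :=
    (Measure.absolutelyContinuous_of_le hle).trans (withDensity_absolutelyContinuous _ _)
  have llr_le := llr_le_log_of_le_withDensity hle
  have hllr := integrable_llr_of_le hac hlog llr_le
  rw [klDiv_of_ac_of_integrable hac hllr]
  simp only [probReal_univ, add_sub_cancel_right]
  exact ENNReal.ofReal_le_ofReal (integral_mono_ae hllr hlog llr_le)

end KullbackLeibler

section AtomCompletion

variable {α : Type*} {mα : MeasurableSpace α} {ν : Measure α} {w : α → ℝ} {a : α}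

/-- The measure `w • ν` completed to total mass one by an atom at `a`. It is a probability measure
when the density `w ≥ 0` satisfies `∫ w ∂ν ≤ 1`. -/
def atomCompletion (ν : Measure α) (w : α → ℝ) (a : α) : Measure α :=
  ν.withDensity (fun b ↦ ENNReal.ofReal (w b)) +
    ENNReal.ofReal (1 - ∫ b, w b ∂ν) • Measure.dirac a

lemma isProbabilityMeasure_atomCompletion (hw : 0 ≤ᵐ[ν] w) (hint : Integrable w ν)
    (hle : ∫ b, w b ∂ν ≤ 1) : IsProbabilityMeasure (atomCompletion ν w a) := by
  constructor
  rw [atomCompletion, Measure.add_apply, withDensity_apply _ MeasurableSet.univ,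
    Measure.restrict_univ, ← ofReal_integral_eq_lintegral_ofReal hint hw, Measure.smul_apply,
    measure_univ, smul_eq_mul, mul_one,
    ← ENNReal.ofReal_add (integral_nonneg_of_ae hw) (sub_nonneg.2 hle)]
  simp

lemma atomCompletion_apply_eq_zero {s : Set α} (hs : MeasurableSet s) (hν : ν s = 0)
    (ha : a ∉ s) : atomCompletion ν w a s = 0 := by
  simp [atomCompletion, withDensity_absolutelyContinuous _ _ hν, hs, ha]

lemma le_atomCompletion_withDensity_inv (hw : Measurable w) (hpos : ∀ᵐ b ∂ν, 0 < w b) :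
    ν ≤ (atomCompletion ν w a).withDensity fun b ↦ ENNReal.ofReal (w b)⁻¹ := by
  have mul_inv_eq_one : (fun b ↦ ENNReal.ofReal (w b)) * (fun b ↦ ENNReal.ofReal (w b)⁻¹)
      =ᵐ[ν] 1 := by
    filter_upwards [hpos] with b hb
    rw [Pi.mul_apply, Pi.one_apply, ← ENNReal.ofReal_mul hb.le, mul_inv_cancel₀ hb.ne',
      ENNReal.ofReal_one]
  calc ν = (ν.withDensity fun b ↦ ENNReal.ofReal (w b)).withDensity
        fun b ↦ ENNReal.ofReal (w b)⁻¹ := by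
        rw [← withDensity_mul ν (by fun_prop) (by fun_prop), withDensity_congr_ae mul_inv_eq_one,
          withDensity_one]
    _ ≤ _ := by
        rw [atomCompletion, withDensity_add_measure]
        exact Measure.le_add_right le_rfl

lemma integral_atomCompletion (hw : Measurable w) (hw0 : 0 ≤ᵐ[ν] w) (hle : ∫ b, w b ∂ν ≤ 1)
    {f : α → ℝ} (hf : StronglyMeasurable f) (hfw : Integrable (fun b ↦ w b * f b) ν) :
    ∫ b, f b ∂(atomCompletion ν w a) = ∫ b, w b * f b ∂ν + (1 - ∫ b, w b ∂ν) * f a := by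
  have toReal_w : (fun b ↦ (ENNReal.ofReal (w b)).toReal • f b) =ᵐ[ν] fun b ↦ w b * f b :=
    hw0.mono fun b hb ↦ by simp only [ENNReal.toReal_ofReal hb, smul_eq_mul]
  have w_lt_top : ∀ᵐ b ∂ν, ENNReal.ofReal (w b) < ⊤ := ae_of_all _ fun b ↦ ENNReal.ofReal_lt_top
  have integrable_density : Integrable f (ν.withDensity fun b ↦ ENNReal.ofReal (w b)) :=
    (integrable_withDensity_iff_integrable_smul' (by fun_prop) w_lt_top).2
      (hfw.congr toReal_w.symm)
  have integrable_atom : Integrable f (ENNReal.ofReal (1 - ∫ b, w b ∂ν) • Measure.dirac a) :=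
    (integrable_dirac' hf (by simp)).smul_measure ENNReal.ofReal_ne_top
  rw [atomCompletion, integral_add_measure integrable_density integrable_atom,
    integral_withDensity_eq_integral_toReal_smul (by fun_prop) w_lt_top,
    integral_congr_ae toReal_w, integral_smul_measure, integral_dirac' _ _ hf,
    ENNReal.toReal_ofReal (sub_nonneg.2 hle), smul_eq_mul]

end AtomCompletion

section Wealth

/-- The wealth of a gambler who stakes the fraction `t` of a unit capital on a bet that multiplies
the stake by `e`. -/
def wealth (t e : ℝ) : ℝ := 1 - t + t * e

variable {t e : ℝ}

@[simp]
lemma wealth_zero_left (e : ℝ) : wealth 0 e = 1 := by simp [wealth]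

lemma one_sub_le_wealth (ht : 0 ≤ t) (he : 0 ≤ e) : 1 - t ≤ wealth t e :=
  le_add_of_nonneg_right (mul_nonneg ht he)

lemma wealth_pos (ht : t ∈ Ico 0 1) (he : 0 ≤ e) : 0 < wealth t e :=
  (sub_pos.2 ht.2).trans_le (one_sub_le_wealth ht.1 he)

lemma mul_log_wealth_le {r : ℝ} (ht : t ∈ Ico 0 1) (he : 0 ≤ e) (hr0 : 0 ≤ r) (hr1 : r ≤ 1) :
    r * Real.log (wealth t e) ≤ Real.log (wealth (r * t) e) := by
  have concave := strictConcaveOn_log_Ioi.concaveOn.2 (mem_Ioi.2 (wealth_pos ht he))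
    (mem_Ioi.2 one_pos) hr0 (sub_nonneg.2 hr1) (add_sub_cancel r 1)
  have wealth_mul : r • wealth t e + (1 - r) • (1 : ℝ) = wealth (r * t) e := by
    simp only [wealth, smul_eq_mul]; ring
  rwa [wealth_mul, Real.log_one, smul_zero, add_zero, smul_eq_mul] at concave

lemma abs_log_wealth_le (ht : t ∈ Ico 0 1) (he : 0 ≤ e) :
    |Real.log (wealth t e)| ≤ e - Real.log (1 - t) := by
  have one_sub_pos : 0 < 1 - t := sub_pos.2 ht.2
  have log_lower : Real.log (1 - t) ≤ Real.log (wealth t e) :=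
    Real.log_le_log one_sub_pos (one_sub_le_wealth ht.1 he)
  have log_upper : Real.log (wealth t e) ≤ wealth t e - 1 :=
    Real.log_le_sub_one_of_pos (wealth_pos ht he)
  have wealth_le : wealth t e ≤ 1 + e := by
    unfold wealth; nlinarith [ht.1, ht.2.le]
  have log_nonpos : Real.log (1 - t) ≤ 0 :=
    Real.log_nonpos one_sub_pos.le (by linarith [ht.1])
  rw [abs_le]
  constructor <;> linarith

end Wealth

section Growth

variable {α : Type*} {mα : MeasurableSpace α} {ν κ : Measure α} {e : α → ℝ} {t : ℝ}

/-- The expected logarithmic growth when the fraction `t` of the capital is staked on the payoff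
`e`; as a function of `t` it is the concave dual objective. -/
def growthRate (ν : Measure α) (e : α → ℝ) (t : ℝ) : ℝ := ∫ a, Real.log (wealth t (e a)) ∂ν

/-- The derivative of `growthRate ν e` at `t`. -/
def growthSlope (ν : Measure α) (e : α → ℝ) (t : ℝ) : ℝ := ∫ a, (e a - 1) / wealth t (e a) ∂ν

/-- The largest growth rate achieved by a stake `t ∈ [0, 1)`, which is the dual value. -/
def maxGrowth (ν : Measure α) (e : α → ℝ) : ℝ≥0∞ :=
  ⨆ t ∈ Ico (0 : ℝ) 1, ENNReal.ofReal (growthRate ν e t)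

lemma integrable_wealth [IsFiniteMeasure ν] (he : Integrable e ν) (t : ℝ) :
    Integrable (fun a ↦ wealth t (e a)) ν := by
  unfold wealth; fun_prop

lemma integrable_log_wealth [IsFiniteMeasure ν] (he : Integrable e ν) (he0 : 0 ≤ᵐ[ν] e)
    (ht : t ∈ Ico 0 1) : Integrable (fun a ↦ Real.log (wealth t (e a))) ν :=
  (he.sub (integrable_const _)).mono' (integrable_wealth he t).aemeasurable.log.aestronglyMeasurable
    (he0.mono fun _ ha ↦ abs_log_wealth_le ht ha)

lemma integrable_inv_wealth [IsFiniteMeasure ν] (he : Integrable e ν) (he0 : 0 ≤ᵐ[ν] e)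
    (ht : t ∈ Ico 0 1) : Integrable (fun a ↦ (wealth t (e a))⁻¹) ν := by
  refine (integrable_const (1 - t)⁻¹).mono'
    (integrable_wealth he t).aemeasurable.inv.aestronglyMeasurable ?_
  filter_upwards [he0] with a ha
  rw [Real.norm_of_nonneg (inv_nonneg.2 (wealth_pos ht ha).le)]
  exact inv_anti₀ (sub_pos.2 ht.2) (one_sub_le_wealth ht.1 ha)

lemma integrable_div_wealth [IsFiniteMeasure ν] (he : Integrable e ν) (he0 : 0 ≤ᵐ[ν] e)
    (ht : t ∈ Ico 0 1) {f : α → ℝ} (hf : Integrable f ν) :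
    Integrable (fun a ↦ f a / wealth t (e a)) ν := by
  refine (hf.norm.div_const (1 - t)).mono'
    (hf.aemeasurable.div (integrable_wealth he t).aemeasurable).aestronglyMeasurable ?_
  filter_upwards [he0] with a ha
  rw [norm_div, Real.norm_of_nonneg (wealth_pos ht ha).le]
  exact div_le_div_of_nonneg_left (norm_nonneg _) (sub_pos.2 ht.2) (one_sub_le_wealth ht.1 ha)

lemma integrable_sub_one_div_wealth [IsFiniteMeasure ν] (he : Integrable e ν) (he0 : 0 ≤ᵐ[ν] e)
    (ht : t ∈ Ico 0 1) : Integrable (fun a ↦ (e a - 1) / wealth t (e a)) ν :=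
  integrable_div_wealth he he0 ht (he.sub (integrable_const 1))

lemma mul_growthRate_le [IsFiniteMeasure ν] (he : Integrable e ν) (he0 : 0 ≤ᵐ[ν] e)
    (ht : t ∈ Ico 0 1) {r : ℝ} (hr0 : 0 ≤ r) (hr1 : r ≤ 1) :
    r * growthRate ν e t ≤ growthRate ν e (r * t) := by
  have hrt : r * t ∈ Ico (0 : ℝ) 1 :=
    ⟨mul_nonneg hr0 ht.1, (mul_le_of_le_one_left ht.1 hr1).trans_lt ht.2⟩
  rw [growthRate, growthRate, ← integral_const_mul]
  exact integral_mono_ae ((integrable_log_wealth he he0 ht).const_mul r)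
    (integrable_log_wealth he he0 hrt) (he0.mono fun a ha ↦ mul_log_wealth_le ht ha hr0 hr1)

lemma integral_inv_wealth [IsProbabilityMeasure ν] (he : Integrable e ν) (he0 : 0 ≤ᵐ[ν] e)
    (ht : t ∈ Ico 0 1) :
    ∫ a, (wealth t (e a))⁻¹ ∂ν = 1 - t * growthSlope ν e t := by
  have inv_eq : (fun a ↦ (wealth t (e a))⁻¹)
      =ᵐ[ν] fun a ↦ 1 - t * ((e a - 1) / wealth t (e a)) := by
    filter_upwards [he0] with a ha
    have := (wealth_pos ht ha).ne'
    field_simp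
    unfold wealth; ring
  rw [integral_congr_ae inv_eq, integral_sub (integrable_const 1)
      ((integrable_sub_one_div_wealth he he0 ht).const_mul t),
    integral_const_mul]
  simp [growthSlope]

lemma integral_div_wealth [IsProbabilityMeasure ν] (he : Integrable e ν) (he0 : 0 ≤ᵐ[ν] e)
    (ht : t ∈ Ico 0 1) :
    ∫ a, e a / wealth t (e a) ∂ν = 1 + (1 - t) * growthSlope ν e t := by
  have split : (fun a ↦ e a / wealth t (e a))
      = fun a ↦ (wealth t (e a))⁻¹ + (e a - 1) / wealth t (e a) := by
    ext a; ring
  rw [split, integral_add (integrable_inv_wealth he he0 ht)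
      (integrable_sub_one_div_wealth he he0 ht), integral_inv_wealth he he0 ht, ← growthSlope]
  ring

lemma continuousOn_growthSlope [IsFiniteMeasure ν] (he : Integrable e ν) (he0 : 0 ≤ᵐ[ν] e)
    {s : ℝ} (hs : s < 1) : ContinuousOn (growthSlope ν e) (Icc 0 s) := by
  have mem_Ico {t : ℝ} (ht : t ∈ Icc 0 s) : t ∈ Ico 0 1 := ⟨ht.1, ht.2.trans_lt hs⟩
  refine continuousOn_of_dominated (bound := fun a ↦ ‖e a - 1‖ / (1 - s))
    (fun t ht ↦ (integrable_sub_one_div_wealth he he0 (mem_Ico ht)).aestronglyMeasurable)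
    (fun t ht ↦ ?_) ((he.sub (integrable_const 1)).norm.div_const _) ?_
  · filter_upwards [he0] with a ha
    have one_sub_le : 1 - s ≤ wealth t (e a) :=
      (sub_le_sub_left ht.2 1).trans (one_sub_le_wealth ht.1 ha)
    rw [norm_div, Real.norm_of_nonneg (wealth_pos (mem_Ico ht) ha).le]
    exact div_le_div_of_nonneg_left (norm_nonneg _) (sub_pos.2 hs) one_sub_le
  · filter_upwards [he0] with a ha
    refine continuousOn_const.div (by unfold wealth; fun_prop) fun t ht ↦ ?_
    exact (wealth_pos (mem_Ico ht) ha).ne'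

-- An interior optimal stake has slope zero and gives both bounds even with `1` in place of `c`, but
-- the optimum may be the excluded `t = 1`; the slack `c > 1` allows stopping at `t = c⁻¹`, where
-- `e / wealth ≤ c` pointwise.
lemma exists_stake_integral_inv_wealth_le [IsProbabilityMeasure ν] (he : Integrable e ν)
    (he0 : 0 ≤ᵐ[ν] e) {c : ℝ} (hc : 1 < c) :
    ∃ t ∈ Ico (0 : ℝ) 1, ∫ a, (wealth t (e a))⁻¹ ∂ν ≤ 1 ∧ ∫ a, e a / wealth t (e a) ∂ν ≤ c := by
  have c_pos : 0 < c := one_pos.trans hc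
  have mem_Ico {t : ℝ} (ht : t ∈ Icc 0 c⁻¹) : t ∈ Ico 0 1 :=
    ⟨ht.1, ht.2.trans_lt (inv_lt_one_of_one_lt₀ hc)⟩
  have zero_mem : (0 : ℝ) ∈ Icc 0 c⁻¹ := left_mem_Icc.2 (inv_pos.2 c_pos).le
  have inv_mem : c⁻¹ ∈ Icc 0 c⁻¹ := right_mem_Icc.2 (inv_pos.2 c_pos).le
  rcases le_total (growthSlope ν e 0) 0 with slope_zero | slope_zero
  · refine ⟨0, mem_Ico zero_mem, by simp, ?_⟩
    rw [integral_div_wealth he he0 (mem_Ico zero_mem)]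
    linarith
  rcases le_total 0 (growthSlope ν e c⁻¹) with slope_inv | slope_inv
  · refine ⟨c⁻¹, mem_Ico inv_mem, ?_, ?_⟩
    · rw [integral_inv_wealth he he0 (mem_Ico inv_mem)]
      linarith [mul_nonneg inv_mem.1 slope_inv]
    have div_wealth_le : (fun a ↦ e a / wealth c⁻¹ (e a)) ≤ᵐ[ν] fun _ ↦ c := by
      filter_upwards [he0] with a ha
      rw [div_le_iff₀ (wealth_pos (mem_Ico inv_mem) ha), wealth, mul_add,
        mul_inv_cancel_left₀ c_pos.ne']
      exact le_add_of_nonneg_left (mul_nonneg c_pos.le (sub_nonneg.2 (mem_Ico inv_mem).2.le))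
    simpa using integral_mono_ae (integrable_div_wealth he he0 (mem_Ico inv_mem) he)
      (integrable_const c) div_wealth_le
  · obtain ⟨t, ht, slope_eq⟩ := intermediate_value_Icc' inv_mem.1
      (continuousOn_growthSlope he he0 (mem_Ico inv_mem).2) ⟨slope_inv, slope_zero⟩
    refine ⟨t, mem_Ico ht, ?_, ?_⟩
    · rw [integral_inv_wealth he he0 (mem_Ico ht), slope_eq, mul_zero, sub_zero]
    · rw [integral_div_wealth he he0 (mem_Ico ht), slope_eq, mul_zero, add_zero]
      exact hc.le

lemma maxGrowth_le_klDiv [IsProbabilityMeasure ν] [IsProbabilityMeasure κ] (heν : Integrable e ν)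
    (heκ : Integrable e κ) (he0 : 0 ≤ᵐ[κ] e) (hle : ∫ a, e a ∂κ ≤ 1) :
    maxGrowth ν e ≤ klDiv ν κ := by
  by_cases hac : ν ≪ κ
  swap; · simp [hac]
  refine iSup₂_le fun t ht ↦ ofReal_integral_log_le_klDiv (he0.mono fun a ha ↦ wealth_pos ht ha)
    (integrable_wealth heκ t) (integrable_log_wealth heν (hac.ae_le he0) ht) ?_
  calc ∫ a, wealth t (e a) ∂κ = wealth t (∫ a, e a ∂κ) := by
        unfold wealth
        rw [integral_add (integrable_const _) (heκ.const_mul t), integral_const_mul]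
        simp
    _ ≤ 1 := by
        unfold wealth
        linarith [mul_le_mul_of_nonneg_left hle ht.1]

lemma exists_klDiv_atomCompletion_le_maxGrowth [IsProbabilityMeasure ν] (hem : Measurable e)
    (he : Integrable e ν) (he0 : 0 ≤ᵐ[ν] e) {a : α} (hea : e a = 0) {c : ℝ} (hc : 1 < c) :
    ∃ w : α → ℝ, IsProbabilityMeasure (atomCompletion ν w a) ∧
      ∫ b, e b ∂(atomCompletion ν w a) ≤ c ∧ klDiv ν (atomCompletion ν w a) ≤ maxGrowth ν e := by
  obtain ⟨t, ht, inv_le, div_le⟩ := exists_stake_integral_inv_wealth_le he he0 hc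
  let w : α → ℝ := fun b ↦ (wealth t (e b))⁻¹
  have w_pos : ∀ᵐ b ∂ν, 0 < w b := he0.mono fun b hb ↦ inv_pos.2 (wealth_pos ht hb)
  have w_nonneg : 0 ≤ᵐ[ν] w := w_pos.mono fun b hb ↦ hb.le
  have w_meas : Measurable w := by unfold w wealth; fun_prop
  have w_mul : (fun b ↦ w b * e b) = fun b ↦ e b / wealth t (e b) := by
    ext b; exact inv_mul_eq_div _ _
  have prob := isProbabilityMeasure_atomCompletion (a := a) w_nonneg
    (integrable_inv_wealth he he0 ht) inv_le
  refine ⟨w, prob, ?_, ?_⟩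
  · rw [integral_atomCompletion w_meas w_nonneg inv_le hem.stronglyMeasurable
      (w_mul ▸ integrable_div_wealth he he0 ht he), hea, mul_zero, add_zero, w_mul]
    exact div_le
  · refine (klDiv_le_ofReal_integral_log ?_
      (le_atomCompletion_withDensity_inv w_meas w_pos)).trans ?_
    · simpa only [w, inv_inv] using integrable_log_wealth he he0 ht
    · simp only [w, inv_inv]
      exact le_iSup₂_of_le t ht le_rfl

end Growth

section Supremum

variable {Q T : Type*} [TopologicalSpace Q] [TopologicalSpace T]

lemma continuous_biSup_of_isCompact {K : Set T} (hK : IsCompact K) {f : Q → T → ℝ≥0∞}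
    (hf : ContinuousOn (Function.uncurry f) (univ ×ˢ K)) :
    Continuous fun q ↦ ⨆ t ∈ K, f q t := by
  have := isCompact_iff_compactSpace.1 hK
  have hf_subtype : Continuous fun p : Q × K ↦ f p.1 p.2 :=
    hf.comp_continuous (continuous_id.prodMap continuous_subtype_val) fun p ↦ ⟨mem_univ p.1, p.2.2⟩
  convert isCompact_univ.continuous_sSup (f := fun q (t : K) ↦ f q t) hf_subtype using 2 with q
  rw [image_univ, sSup_range, iSup_subtype']

lemma iSup_Ico_eq_iInf_iSup_Icc {φ : ℝ → ℝ≥0∞}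
    (hφ : ∀ t ∈ Ico (0 : ℝ) 1, ∀ r ∈ Ioo (0 : ℝ) 1, ENNReal.ofReal r * φ t ≤ φ (r * t)) :
    ⨆ t ∈ Ico (0 : ℝ) 1, φ t
      = ⨅ r ∈ Ioo (0 : ℝ) 1, (ENNReal.ofReal r)⁻¹ * ⨆ t ∈ Icc 0 r, φ t := by
  refine le_antisymm (iSup₂_le fun t ht ↦ le_iInf₂ fun r hr ↦ ?_) ?_
  · have mul_mem : r * t ∈ Icc 0 r :=
      ⟨mul_nonneg hr.1.le ht.1, mul_le_of_le_one_right hr.1.le ht.2.le⟩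
    rw [mul_comm, ← div_eq_mul_inv,
      ENNReal.le_div_iff_mul_le (.inl (by simpa using hr.1)) (.inl ENNReal.ofReal_ne_top), mul_comm]
    exact (hφ t ht r hr).trans (le_iSup₂_of_le (r * t) mul_mem le_rfl)
  · have inv_tendsto : Tendsto (fun r : ℝ ↦ (ENNReal.ofReal r)⁻¹) (𝓝[<] 1) (𝓝 1) := by
      have : Continuous fun r : ℝ ↦ (ENNReal.ofReal r)⁻¹ := ENNReal.continuous_ofReal.inv
      simpa using (this.tendsto 1).mono_left nhdsWithin_le_nhds
    have tendsto_mul := ENNReal.Tendsto.mul_const (b := ⨆ t ∈ Ico (0 : ℝ) 1, φ t) inv_tendsto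
      (.inl one_ne_zero)
    rw [one_mul] at tendsto_mul
    refine ge_of_tendsto tendsto_mul ?_
    filter_upwards [Ioo_mem_nhdsLT one_pos] with r hr
    have sup_le : ⨆ t ∈ Icc 0 r, φ t ≤ ⨆ t ∈ Ico (0 : ℝ) 1, φ t :=
      biSup_mono fun t ht ↦ ⟨ht.1, ht.2.trans_lt hr.2⟩
    exact iInf₂_le_of_le r hr (mul_le_mul_right sup_le _)

lemma continuous_iSup_Ico_of_mul_le {f : Q → ℝ → ℝ≥0∞}
    (hf : ContinuousOn (Function.uncurry f) (univ ×ˢ Ico 0 1))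
    (hmul : ∀ q, ∀ t ∈ Ico (0 : ℝ) 1, ∀ r ∈ Ioo (0 : ℝ) 1,
      ENNReal.ofReal r * f q t ≤ f q (r * t)) :
    Continuous fun q ↦ ⨆ t ∈ Ico (0 : ℝ) 1, f q t := by
  refine continuous_iff_lower_upperSemicontinuous.2 ⟨?_, ?_⟩
  · exact lowerSemicontinuous_biSup fun t ht ↦ Continuous.lowerSemicontinuous <|
      hf.comp_continuous (.prodMk_left t) fun q ↦ ⟨mem_univ q, ht⟩
  · simp only [iSup_Ico_eq_iInf_iSup_Icc (hmul _)]
    refine upperSemicontinuous_biInf fun r hr ↦ Continuous.upperSemicontinuous ?_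
    have sup_continuous : Continuous fun q ↦ ⨆ t ∈ Icc 0 r, f q t :=
      continuous_biSup_of_isCompact isCompact_Icc <|
        hf.mono (prod_mono_right fun t ht ↦ ⟨ht.1, ht.2.trans_lt hr.2⟩)
    exact (ENNReal.continuous_const_mul (by simpa using hr.1)).comp sup_continuous

end Supremum

section Integral

variable {Ω : Type*} [TopologicalSpace Ω] [MeasurableSpace Ω] [OpensMeasurableSpace Ω]

open scoped BoundedContinuousFunction

lemma continuous_integral_boundedContinuousFunction_prod :
    Continuous fun p : (Ω →ᵇ ℝ) × ProbabilityMeasure Ω ↦ ∫ ω, p.1 ω ∂(p.2 : Measure Ω) := by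
  refine continuous_prod_of_continuous_lipschitzWith _ 1
    (fun f ↦ ProbabilityMeasure.continuous_integral_boundedContinuousFunction f)
    fun ν ↦ LipschitzWith.of_dist_le_mul fun f g ↦ ?_
  rw [NNReal.coe_one, one_mul, dist_eq_norm, dist_eq_norm,
    ← integral_sub (f.integrable _) (g.integrable _)]
  exact BoundedContinuousFunction.norm_integral_le_norm (μ := (ν : Measure Ω)) (f - g)

lemma continuousOn_integral_of_measure_compl_Icc_eq_zero {P : Type*} [TopologicalSpace P]
    {a b : ℝ} (hab : a ≤ b) {s : Set P} {f : P → ℝ → ℝ}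
    (hf : ContinuousOn (Function.uncurry f) (s ×ˢ Icc a b)) :
    ContinuousOn (fun q : ProbabilityMeasure ℝ × P ↦ ∫ u, f q.2 u ∂(q.1 : Measure ℝ))
      ({ν : ProbabilityMeasure ℝ | (ν : Measure ℝ) (Icc a b)ᶜ = 0} ×ˢ s) := by
  let restrictIcc : C(s, C(Icc a b, ℝ)) := ContinuousMap.curry
    ⟨fun p : s × Icc a b ↦ f p.1 p.2,
      hf.comp_continuous (continuous_subtype_val.prodMap continuous_subtype_val)
        fun p ↦ ⟨p.1.2, p.2.2⟩⟩
  let extend (g : C(Icc a b, ℝ)) : ℝ →ᵇ ℝ :=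
    (BoundedContinuousFunction.mkOfCompact g).compContinuous ⟨projIcc a b hab, continuous_projIcc⟩
  have continuous_extend : Continuous extend :=
    (BoundedContinuousFunction.continuous_compContinuous _).comp
      (ContinuousMap.isometryEquivBoundedOfCompact (Icc a b) ℝ).continuous
  have extend_eq (p : s) {u : ℝ} (hu : u ∈ Icc a b) : extend (restrictIcc p) u = f p u := by
    change f p (projIcc a b hab u) = f p u
    rw [projIcc_of_mem hab hu]
  rw [continuousOn_iff_continuous_domRestrict]
  have continuous_integral := continuous_integral_boundedContinuousFunction_prod.comp <|
    ((continuous_extend.comp restrictIcc.continuous).prodMap continuous_id).comp <|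
      (show Continuous fun q : ↥({ν : ProbabilityMeasure ℝ | (ν : Measure ℝ) (Icc a b)ᶜ = 0} ×ˢ s) ↦
        ((⟨q.1.2, q.2.2⟩ : s), q.1.1) by fun_prop)
  refine continuous_integral.congr fun q ↦ integral_congr_ae ?_
  filter_upwards [mem_ae_iff.2 q.2.1] with u hu
  exact extend_eq _ hu

end Integral

section Duality

variable {ν κ : Measure ℝ} {x y : ℝ}

lemma KLdiv_eq_klDiv [IsProbabilityMeasure ν] [IsProbabilityMeasure κ] :
    KLdiv ν κ = klDiv ν κ := by
  simp [KLdiv, klDiv_def]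

lemma ae_mem_Icc_of_mem_Bset (hν : ν ∈ Bset) : ∀ᵐ u ∂ν, u ∈ Icc (0 : ℝ) 1 := mem_ae_iff.2 hν.2

lemma integrable_id_of_mem_Bset (hν : ν ∈ Bset) : Integrable (fun u ↦ u) ν :=
  have := hν.1
  .of_mem_Icc 0 1 aemeasurable_id (ae_mem_Icc_of_mem_Bset hν)

/-- The payoff `(1 - u) / (1 - x)`. It is nonnegative on `[0, 1]`, and its expectation is at most
`1` exactly under the distributions of mean at least `x`. -/
def meanPayoff (x u : ℝ) : ℝ := (1 - u) / (1 - x)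

lemma meanPayoff_nonneg {u : ℝ} (hx : x < 1) (hu : u ≤ 1) : 0 ≤ meanPayoff x u :=
  div_nonneg (sub_nonneg.2 hu) (sub_nonneg.2 hx.le)

lemma ae_meanPayoff_nonneg (hν : ν ∈ Bset) (hx : x < 1) : 0 ≤ᵐ[ν] meanPayoff x :=
  (ae_mem_Icc_of_mem_Bset hν).mono fun _ hu ↦ meanPayoff_nonneg hx hu.2

lemma integrable_meanPayoff (hν : ν ∈ Bset) (x : ℝ) : Integrable (meanPayoff x) ν :=
  have := hν.1
  ((integrable_const 1).sub (integrable_id_of_mem_Bset hν)).div_const _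

lemma integral_meanPayoff (hν : ν ∈ Bset) (x : ℝ) :
    ∫ u, meanPayoff x u ∂ν = meanPayoff x (mmean ν) := by
  have := hν.1
  simp only [meanPayoff, mmean]
  rw [integral_div, integral_sub (integrable_const 1) (integrable_id_of_mem_Bset hν)]
  simp

lemma maxGrowth_le_KLinfU (hν : ν ∈ Bset) (hx : x < 1) :
    maxGrowth ν (meanPayoff x) ≤ KLinfU ν x := by
  refine le_iInf₂ fun κ ⟨hκ, hmean⟩ ↦ ?_
  have := hν.1
  have := hκ.1
  rw [KLdiv_eq_klDiv]
  refine maxGrowth_le_klDiv (integrable_meanPayoff hν x) (integrable_meanPayoff hκ x)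
    (ae_meanPayoff_nonneg hκ hx) ?_
  rw [integral_meanPayoff hκ]
  exact div_le_one_of_le₀ (sub_le_sub_left hmean 1) (sub_nonneg.2 hx.le)

lemma KLinfU_le_maxGrowth_of_lt (hν : ν ∈ Bset) (hxy : x < y) (hy : y < 1) :
    KLinfU ν x ≤ maxGrowth ν (meanPayoff y) := by
  have := hν.1
  have one_sub_pos : 0 < 1 - y := sub_pos.2 hy
  obtain ⟨w, prob, mean_le, kl_le⟩ := exists_klDiv_atomCompletion_le_maxGrowth
    (show Measurable (meanPayoff y) by unfold meanPayoff; fun_prop)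
    (integrable_meanPayoff hν y) (ae_meanPayoff_nonneg hν hy)
    (show meanPayoff y 1 = 0 by simp [meanPayoff])
    ((one_lt_div one_sub_pos).2 (sub_lt_sub_left hxy 1))
  have mem_Bset : atomCompletion ν w 1 ∈ Bset :=
    ⟨prob, atomCompletion_apply_eq_zero measurableSet_Icc.compl hν.2 (by simp)⟩
  rw [integral_meanPayoff mem_Bset, meanPayoff, div_le_div_iff_of_pos_right one_sub_pos,
    sub_le_sub_iff_left] at mean_le
  exact iInf₂_le_of_le _ ⟨mem_Bset, mean_le⟩ (KLdiv_eq_klDiv.trans_le kl_le)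

lemma continuousOn_growthRate_meanPayoff :
    ContinuousOn (fun q : ProbabilityMeasure ℝ × ℝ × ℝ ↦
      growthRate (q.1 : Measure ℝ) (meanPayoff q.2.1) q.2.2) (BsetW ×ˢ Iio 1 ×ˢ Ico 0 1) := by
  refine continuousOn_integral_of_measure_compl_Icc_eq_zero zero_le_one
    (f := fun (p : ℝ × ℝ) u ↦ Real.log (wealth p.2 (meanPayoff p.1 u))) ?_
  have one_sub_ne_zero : ∀ p ∈ (Iio (1 : ℝ) ×ˢ Ico (0 : ℝ) 1) ×ˢ Icc (0 : ℝ) 1, 1 - p.1.1 ≠ 0 :=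
    fun p hp ↦ (sub_pos.2 hp.1.1).ne'
  refine ContinuousOn.log ?_ fun p hp ↦
    (wealth_pos hp.1.2 (meanPayoff_nonneg hp.1.1 hp.2.2)).ne'
  unfold wealth meanPayoff
  fun_prop (disch := assumption)

lemma continuousOn_maxGrowth_meanPayoff :
    ContinuousOn (fun p : ProbabilityMeasure ℝ × ℝ ↦ maxGrowth (p.1 : Measure ℝ) (meanPayoff p.2))
      (BsetW ×ˢ Iio 1) := by
  rw [continuousOn_iff_continuous_domRestrict]
  refine continuous_iSup_Ico_of_mul_le (Q := ↥(BsetW ×ˢ Iio (1 : ℝ)))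
    (f := fun q t ↦ ENNReal.ofReal (growthRate (q.1.1 : Measure ℝ) (meanPayoff q.1.2) t)) ?_ ?_
  · exact ENNReal.continuous_ofReal.comp_continuousOn <|
      continuousOn_growthRate_meanPayoff.comp
        (f := fun p : ↥(BsetW ×ˢ Iio (1 : ℝ)) × ℝ ↦ (p.1.1.1, p.1.1.2, p.2)) (by fun_prop)
        fun p hp ↦ ⟨p.1.2.1, p.1.2.2, hp.2⟩
  · intro q t ht r hr
    have hν : (q.1.1 : Measure ℝ) ∈ Bset := ⟨inferInstance, q.2.1⟩
    rw [← ENNReal.ofReal_mul hr.1.le]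
    exact ENNReal.ofReal_le_ofReal <| mul_growthRate_le (integrable_meanPayoff hν _)
      (ae_meanPayoff_nonneg hν q.2.2) ht hr.1.le hr.2.le

theorem KLinfU_eq_maxGrowth (hν : ν ∈ Bset) (hx : x < 1) :
    KLinfU ν x = maxGrowth ν (meanPayoff x) := by
  refine le_antisymm ?_ (maxGrowth_le_KLinfU hν hx)
  let P : ProbabilityMeasure ℝ := ⟨ν, hν.1⟩
  have continuous_in_x : ContinuousOn (fun y ↦ maxGrowth ν (meanPayoff y)) (Iio 1) :=
    continuousOn_maxGrowth_meanPayoff.comp (f := fun y ↦ (P, y)) (by fun_prop)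
      fun y hy ↦ ⟨hν.2, hy⟩
  refine ge_of_tendsto (x := 𝓝[>] x)
    ((continuous_in_x.continuousAt (Iio_mem_nhds hx)).tendsto.mono_left nhdsWithin_le_nhds) ?_
  filter_upwards [Ioo_mem_nhdsGT hx] with y hy
  exact KLinfU_le_maxGrowth_of_lt hν hy.1 hy.2

theorem continuousOn_KLinfU :
    ContinuousOn (fun p : ProbabilityMeasure ℝ × ℝ ↦ KLinfU (p.1 : Measure ℝ) p.2)
      (BsetW ×ˢ Iio 1) :=
  continuousOn_maxGrowth_meanPayoff.congr fun p hp ↦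
    KLinfU_eq_maxGrowth ⟨p.1.2, hp.1⟩ hp.2

end Duality

section Reflection

variable {ν κ : Measure ℝ}

/-- The image of a distribution under the reflection `u ↦ 1 - u`, which exchanges the constraints
on the mean in `KLinfU` and `KLinfL`. -/
def reflection (ν : Measure ℝ) : Measure ℝ := ν.map (1 - ·)

lemma reflection_reflection (ν : Measure ℝ) : reflection (reflection ν) = ν := by
  rw [reflection, reflection, Measure.map_map (by fun_prop) (by fun_prop)]
  simp

lemma reflection_mem_Bset (hν : ν ∈ Bset) : reflection ν ∈ Bset := by
  have := hν.1
  refine ⟨Measure.isProbabilityMeasure_map (by fun_prop), ?_⟩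
  rw [reflection, Measure.map_apply (by fun_prop) measurableSet_Icc.compl]
  simpa using hν.2

lemma mmean_reflection (hν : ν ∈ Bset) : mmean (reflection ν) = 1 - mmean ν := by
  have := hν.1
  rw [mmean, reflection, integral_map (by fun_prop) (by fun_prop),
    integral_sub (integrable_const 1) (integrable_id_of_mem_Bset hν)]
  simp [mmean]

lemma KLdiv_reflection_le (hν : ν ∈ Bset) (hκ : κ ∈ Bset) :
    KLdiv (reflection ν) (reflection κ) ≤ KLdiv ν κ := by
  have := hν.1
  have := hκ.1
  have := (reflection_mem_Bset hν).1
  have := (reflection_mem_Bset hκ).1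
  rw [KLdiv_eq_klDiv, KLdiv_eq_klDiv]
  exact klDiv_map_le _ _ (by fun_prop)

lemma KLinfU_reflection_le_KLinfL (hν : ν ∈ Bset) (x : ℝ) :
    KLinfU (reflection ν) (1 - x) ≤ KLinfL ν x :=
  le_iInf₂ fun κ ⟨hκ, hmean⟩ ↦ iInf₂_le_of_le (reflection κ)
    ⟨reflection_mem_Bset hκ, by rw [mmean_reflection hκ]; exact sub_le_sub_left hmean 1⟩
    (KLdiv_reflection_le hν hκ)

lemma KLinfL_reflection_le_KLinfU (hν : ν ∈ Bset) (x : ℝ) :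
    KLinfL (reflection ν) (1 - x) ≤ KLinfU ν x :=
  le_iInf₂ fun κ ⟨hκ, hmean⟩ ↦ iInf₂_le_of_le (reflection κ)
    ⟨reflection_mem_Bset hκ, by rw [mmean_reflection hκ]; exact sub_le_sub_left hmean 1⟩
    (KLdiv_reflection_le hν hκ)

lemma KLinfL_eq_KLinfU_reflection (hν : ν ∈ Bset) (x : ℝ) :
    KLinfL ν x = KLinfU (reflection ν) (1 - x) := by
  refine le_antisymm ?_ (KLinfU_reflection_le_KLinfL hν x)
  simpa only [reflection_reflection, sub_sub_cancel] using
    KLinfL_reflection_le_KLinfU (reflection_mem_Bset hν) (1 - x)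

theorem continuousOn_KLinfL :
    ContinuousOn (fun p : ProbabilityMeasure ℝ × ℝ ↦ KLinfL (p.1 : Measure ℝ) p.2)
      (BsetW ×ˢ Ioi 0) := by
  have continuous_reflection : Continuous fun p : ProbabilityMeasure ℝ × ℝ ↦
      (p.1.map (f := fun u : ℝ ↦ 1 - u) (by fun_prop), 1 - p.2) :=
    ((ProbabilityMeasure.continuous_map (by fun_prop)).comp continuous_fst).prodMk (by fun_prop)
  refine (continuousOn_KLinfU.comp continuous_reflection.continuousOn fun p hp ↦
    ⟨(reflection_mem_Bset ⟨p.1.2, hp.1⟩).2, sub_lt_self (1 : ℝ) hp.2⟩).congr fun p hp ↦ ?_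
  exact KLinfL_eq_KLinfU_reflection ⟨p.1.2, hp.1⟩ p.2

end Reflection

/-- Continuity of `KL_inf` for bounded distributions: with `B` endowed with
the topology of weak convergence, `(ν,x) ↦ KL_inf^U(ν,B,x)` is jointly continuous on
`B × [0,1)` and `(ν,x) ↦ KL_inf^L(ν,B,x)` is jointly continuous on `B × (0,1]`. -/
theorem stmt_17 :
    ContinuousOn (fun p : ProbabilityMeasure ℝ × ℝ => KLinfU (p.1 : Measure ℝ) p.2)
      (BsetW ×ˢ Set.Ico (0:ℝ) 1) ∧
    ContinuousOn (fun p : ProbabilityMeasure ℝ × ℝ => KLinfL (p.1 : Measure ℝ) p.2)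
      (BsetW ×ˢ Set.Ioc (0:ℝ) 1) := by
  exact ⟨continuousOn_KLinfU.mono (prod_mono_right Ico_subset_Iio_self),
    continuousOn_KLinfL.mono (prod_mono_right Ioc_subset_Ioi_self)⟩
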